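/- Proposition 1(a) (real PPT-invariant representation): let P be an n-partite probability distribution with a quantum representation given by an n-partite quantum state ρ and projections M^s_{a|x}, and suppose that ρ^{T_m} is positive semidefinite for a given subset m ⊆ Fin n. Then P has a quantum representation by a state ρ' on the doubled spaces (Π s, Fin 2 × ι s) and real symmetric projections M̂^s_{a|x}, where ρ' has real entries and is PPT-invariant across m, i.e. ρ' = (ρ')ᵀ = (ρ')^{T_m}, and P(a₁,…,a_n|x₁,…,x_n) = tr[ρ'·(⊗_s M̂^s_{a_s|x_s})]. -/

import Mathlib

open Matrix
open scoped Kronecker ComplexOrder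

/-- Partial transpose on the first tensor factor. -/
def ptA {ιA ιB : Type*} (ρ : Matrix (ιA × ιB) (ιA × ιB) ℂ) : Matrix (ιA × ιB) (ιA × ιB) ℂ :=
  fun p q => ρ (q.1, p.2) (p.1, q.2)

/-- Sum of the absolute values of the negative eigenvalues of a Hermitian matrix
(0 if the matrix is not Hermitian). -/
noncomputable def negEig {ι : Type*} [Fintype ι] [DecidableEq ι] (M : Matrix ι ι ℂ) : ℝ :=
  letI := Classical.dec M.IsHermitian
  if h : M.IsHermitian then ∑ i, max 0 (-(h.eigenvalues i)) else 0
/-- The 2×2 matrix Y = [[0,1],[-1,0]] (viewed as a complex matrix). -/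
noncomputable def Ymat : Matrix (Fin 2) (Fin 2) ℂ := !![0, 1; -1, 0]

/-- The complex 2×2 matrix 1 - iY = [[1,-i],[i,1]]. -/
noncomputable def oneMinusIY : Matrix (Fin 2) (Fin 2) ℂ := !![1, -Complex.I; Complex.I, 1]

/-- Real embedding of an observable: Â = 1 ⊗ A_r + Y ⊗ A_i, as a block matrix
[[A_r, A_i], [-A_i, A_r]] on Fin 2 × ι. -/
noncomputable def obsEmbed {ι : Type*} (A : Matrix ι ι ℂ) :
    Matrix (Fin 2 × ι) (Fin 2 × ι) ℂ :=
  fun p q => (1 : Matrix (Fin 2) (Fin 2) ℂ) p.1 q.1 * ((A p.2 q.2).re : ℂ)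
    + Ymat p.1 q.1 * ((A p.2 q.2).im : ℂ)

/-- Real embedding of an n-partite state: the entry at row (a,i), column (b,j) is
2^(-n) · Re[(∏ s, (1-iY)(a s, b s)) · ρ(i,j)]. -/
noncomputable def stateEmbed {n : ℕ} {ι : Fin n → Type*}
    (ρ : Matrix ((s : Fin n) → ι s) ((s : Fin n) → ι s) ℂ) :
    Matrix ((s : Fin n) → Fin 2 × ι s) ((s : Fin n) → Fin 2 × ι s) ℂ :=
  fun r c =>
    ((((2 : ℝ) ^ n)⁻¹ *
      ((∏ s, oneMinusIY (r s).1 (c s).1) * ρ (fun s => (r s).2) (fun s => (c s).2)).re : ℝ) : ℂ)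

/-- Tensor product of one matrix per party. -/
def npTensor {n : ℕ} {ι : Fin n → Type*} (M : (s : Fin n) → Matrix (ι s) (ι s) ℂ) :
    Matrix ((s : Fin n) → ι s) ((s : Fin n) → ι s) ℂ :=
  fun i j => ∏ s, M s (i s) (j s)

/-- Partial transpose across the bipartition m : exchanges row and column index
at every coordinate s ∈ m. -/
def ptm {n : ℕ} {ι : Fin n → Type*} [DecidableEq (Fin n)] (m : Finset (Fin n))
    (ρ : Matrix ((s : Fin n) → ι s) ((s : Fin n) → ι s) ℂ) :
    Matrix ((s : Fin n) → ι s) ((s : Fin n) → ι s) ℂ :=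
  fun i j => ρ (fun s => if s ∈ m then j s else i s) (fun s => if s ∈ m then i s else j s)

lemma obsEmbed_conjTranspose {ι : Type*} {A : Matrix ι ι ℂ} (h : A.IsHermitian) :
    (obsEmbed A)ᵀ = obsEmbed A := by
  ext ⟨a, i⟩ ⟨b, j⟩
  have := h.apply i j
  have h1 := congrArg Complex.re this
  have h2 := congrArg Complex.im this
  simp at h1 h2
  fin_cases a <;> fin_cases b <;> simp [obsEmbed, Ymat, h1, ← h2]

lemma obsEmbed_im {ι : Type*} (A : Matrix ι ι ℂ) (p q) : (obsEmbed A p q).im = 0 := by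
  obtain ⟨a, i⟩ := p
  obtain ⟨b, j⟩ := q
  fin_cases a <;> fin_cases b <;> simp [obsEmbed, Ymat]

lemma obsEmbed_mul {ι : Type*} [Fintype ι] (A B : Matrix ι ι ℂ) :
    obsEmbed A * obsEmbed B = obsEmbed (A * B) := by
  ext ⟨a, i⟩ ⟨b, j⟩
  rw [Matrix.mul_apply, Fintype.sum_prod_type]
  fin_cases a <;> fin_cases b <;>
    simp [obsEmbed, Ymat, Matrix.mul_apply, Finset.sum_add_distrib,
      sub_eq_add_neg, Matrix.one_apply] <;> ring

lemma obsEmbed_one {ι : Type*} [DecidableEq ι] : obsEmbed (1 : Matrix ι ι ℂ) = 1 := by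
  ext ⟨a, i⟩ ⟨b, j⟩
  by_cases h : i = j <;> fin_cases a <;> fin_cases b <;>
    simp [obsEmbed, Ymat, Matrix.one_apply, h]

lemma obsEmbed_sum {ι O : Type*} [Fintype O] (A : O → Matrix ι ι ℂ) :
    ∑ o, obsEmbed (A o) = obsEmbed (∑ o, A o) := by
  ext ⟨a, i⟩ ⟨b, j⟩
  simp [Matrix.sum_apply, obsEmbed, Finset.sum_add_distrib, Finset.mul_sum]

/-- The vector with `1 - iY = v v^*`. -/
noncomputable def vvec : Fin 2 → ℂ := ![1, Complex.I]

lemma oneMinusIY_eq (a b : Fin 2) : oneMinusIY a b = vvec a * star (vvec b) := by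
  fin_cases a <;> fin_cases b <;> simp [oneMinusIY, vvec]

lemma psd_re {κ : Type*} [Fintype κ] {A : Matrix κ κ ℂ} (h : A.PosSemidef) :
    (Matrix.of fun i j => (((A i j).re : ℝ) : ℂ)).PosSemidef := by
  have h2 : ((1 / 2 : ℝ) • (A + Aᵀ)).PosSemidef :=
    (h.add h.transpose).smul (by norm_num)
  convert h2 using 1
  ext i j
  have := h.1.apply i j
  simp only [Matrix.of_apply, Matrix.smul_apply, Matrix.add_apply, Matrix.transpose_apply]
  have h1 := congrArg Complex.re this
  have h2 := congrArg Complex.im this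
  simp at h1 h2
  apply Complex.ext <;> simp [h1, ← h2] 
  ring

lemma psd_diag_conj {κ : Type*} [Fintype κ] [DecidableEq κ] {A : Matrix κ κ ℂ}
    (h : A.PosSemidef) (f : κ → ℂ) :
    (Matrix.of fun i j => f i * A i j * star (f j)).PosSemidef := by
  convert h.mul_mul_conjTranspose_same (Matrix.diagonal f) using 1
  ext i j
  simp [Matrix.diagonal_conjTranspose, Matrix.mul_diagonal, Matrix.diagonal_mul]

section
variable {n : ℕ} {ι : Fin n → Type*}

lemma ptm_ptm (m : Finset (Fin n)) (ρ : Matrix ((s : Fin n) → ι s) ((s : Fin n) → ι s) ℂ) :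
    ptm m (ptm m ρ) = ρ := by
  ext i j
  simp only [ptm]
  congr 1 <;> ext s <;> by_cases h : s ∈ m <;> simp [h]

lemma ptm_empty (ρ : Matrix ((s : Fin n) → ι s) ((s : Fin n) → ι s) ℂ) :
    ptm ∅ ρ = ρ := by
  ext i j
  simp [ptm]

lemma psd_ptm_stateEmbed [∀ s, Fintype (ι s)] [∀ s, DecidableEq (ι s)] (m : Finset (Fin n))
    (ρ : Matrix ((s : Fin n) → ι s) ((s : Fin n) → ι s) ℂ)
    (h : (ptm m ρ).PosSemidef) : (ptm m (stateEmbed ρ)).PosSemidef := by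
  have h1 := h.submatrix (fun (r : (s : Fin n) → Fin 2 × ι s) s => (r s).2)
  have h2 := psd_re (psd_diag_conj h1
    (fun r => ∏ s, if s ∈ m then star (vvec (r s).1) else vvec (r s).1))
  have h3 := h2.smul (α := ℝ) (show (0 : ℝ) ≤ ((2 : ℝ) ^ n)⁻¹ by positivity)
  convert h3 using 1
  ext r c
  simp only [ptm, stateEmbed, Matrix.smul_apply, Matrix.of_apply, Matrix.submatrix_apply,
    Complex.real_smul, ← Complex.ofReal_mul]
  congr 3
  rw [star_prod, mul_right_comm, ← Finset.prod_mul_distrib]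
  congr 2
  · funext s
    rw [oneMinusIY_eq]
    by_cases hs : s ∈ m <;> simp [hs, mul_comm]
  · funext s
    by_cases hs : s ∈ m <;> simp [hs]
  · funext s
    by_cases hs : s ∈ m <;> simp [hs]

lemma npTensor_im (A : (s : Fin n) → Matrix (ι s) (ι s) ℂ) (h : ∀ s p q, (A s p q).im = 0)
    (p q) : (npTensor A p q).im = 0 := by
  unfold npTensor
  have : ∀ s, A s (p s) (q s) = (((A s (p s) (q s)).re : ℝ) : ℂ) := fun s =>
    Complex.ext (by simp) (by simp [h])
  rw [Finset.prod_congr rfl fun s _ => this s, ← Complex.ofReal_prod]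
  exact Complex.ofReal_im _

lemma local_sum {κ : Type*} (A : Matrix κ κ ℂ) (i j : κ) :
    ∑ x : Fin 2 × Fin 2, oneMinusIY x.1 x.2 * obsEmbed A (x.2, j) (x.1, i) = 2 * A j i := by
  rw [Fintype.sum_prod_type]
  simp [oneMinusIY, obsEmbed, Ymat]
  conv_rhs => rw [← Complex.re_add_im (A j i)]
  ring

lemma trace_stateEmbed [∀ s, Fintype (ι s)]
    (ρ : Matrix ((s : Fin n) → ι s) ((s : Fin n) → ι s) ℂ)
    (A : (s : Fin n) → Matrix (ι s) (ι s) ℂ) :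
    Matrix.trace (stateEmbed ρ * npTensor (fun s => obsEmbed (A s))) =
      (((Matrix.trace (ρ * npTensor A)).re : ℝ) : ℂ) := by
  classical
  have key : ∑ r : (s : Fin n) → Fin 2 × ι s, ∑ c : (s : Fin n) → Fin 2 × ι s,
      ((∏ s, oneMinusIY (r s).1 (c s).1) * ρ (fun s => (r s).2) (fun s => (c s).2)) *
        npTensor (fun s => obsEmbed (A s)) c r = 2 ^ n * Matrix.trace (ρ * npTensor A) := by
    let e : ((s : Fin n) → Fin 2 × ι s) ≃ ((Fin n → Fin 2) × ((s : Fin n) → ι s)) :=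
      { toFun := fun r => (fun s => (r s).1, fun s => (r s).2)
        invFun := fun x s => (x.1 s, x.2 s)
        left_inv := fun r => rfl
        right_inv := fun x => rfl }
    let e2 : (Fin n → Fin 2 × Fin 2) ≃ ((Fin n → Fin 2) × (Fin n → Fin 2)) :=
      { toFun := fun r => (fun s => (r s).1, fun s => (r s).2)
        invFun := fun x s => (x.1 s, x.2 s)
        left_inv := fun r => rfl
        right_inv := fun x => rfl }
    have inner : ∀ i j : (s : Fin n) → ι s,
        ∑ a : Fin n → Fin 2, ∑ b : Fin n → Fin 2,
          (∏ s, oneMinusIY (a s) (b s)) * ∏ s, obsEmbed (A s) (b s, j s) (a s, i s)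
        = 2 ^ n * npTensor A j i := by
      intro i j
      rw [← Fintype.sum_prod_type'
        (f := fun a b : Fin n → Fin 2 => (∏ s, oneMinusIY (a s) (b s)) *
          ∏ s, obsEmbed (A s) (b s, j s) (a s, i s)), ← Equiv.sum_comp e2]
      simp only [← Finset.prod_mul_distrib]
      have := Finset.prod_univ_sum (fun _ : Fin n => (Finset.univ : Finset (Fin 2 × Fin 2)))
        (fun s x => oneMinusIY x.1 x.2 * obsEmbed (A s) (x.2, j s) (x.1, i s))
      rw [Fintype.piFinset_univ] at this
      refine Eq.trans this.symm ?_
      simp only [local_sum, Finset.prod_mul_distrib]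
      simp [npTensor]
    rw [← Equiv.sum_comp e.symm]
    simp_rw [← Equiv.sum_comp e.symm (fun c => _ * npTensor (fun s => obsEmbed (A s)) c _)]
    simp only [Fintype.sum_prod_type, Matrix.trace, Matrix.diag, Matrix.mul_apply, Finset.mul_sum]
    rw [Finset.sum_comm]
    refine Finset.sum_congr rfl fun i _ => ?_
    simp only [e, Equiv.coe_fn_symm_mk]
    simp_rw [Finset.sum_comm (s := (Finset.univ : Finset (Fin n → Fin 2)))
      (t := (Finset.univ : Finset ((s : Fin n) → ι s)))]
    refine Finset.sum_congr rfl fun j _ => ?_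
    have := congrArg (fun z => ρ i j * z) (inner i j)
    simp only [Finset.mul_sum] at this
    rw [show (2 : ℂ) ^ n * (ρ i j * npTensor A j i) = ρ i j * (2 ^ n * npTensor A j i) by ring,
      ← this]
    refine Finset.sum_congr rfl fun a _ => Finset.sum_congr rfl fun b _ => ?_
    simp only [npTensor]
    ring
  have him : ∀ p q, (npTensor (fun s => obsEmbed (A s)) p q).im = 0 :=
    npTensor_im _ fun s => obsEmbed_im (A s)
  have key2 := congrArg Complex.re key
  have h2 : ((2 : ℂ) ^ n * Matrix.trace (ρ * npTensor A)).re
      = (2 : ℝ) ^ n * (Matrix.trace (ρ * npTensor A)).re := by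
    rw [show (2 : ℂ) ^ n = (((2 : ℝ) ^ n : ℝ) : ℂ) by push_cast; rfl, Complex.re_ofReal_mul]
  rw [h2] at key2
  have h3 : (Matrix.trace (ρ * npTensor A)).re = ((2 : ℝ) ^ n)⁻¹ *
      ((2 : ℝ) ^ n * (Matrix.trace (ρ * npTensor A)).re) := by
    field_simp
  rw [h3, ← key2]
  simp only [Matrix.trace, Matrix.diag, Matrix.mul_apply, Complex.re_sum, Finset.mul_sum,
    Complex.ofReal_sum]
  refine Finset.sum_congr rfl fun r _ => Finset.sum_congr rfl fun c _ => ?_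
  apply Complex.ext
  · simp [stateEmbed, him, Complex.mul_re, -Complex.ofReal_mul, -Complex.ofReal_inv]
    ring
  · simp [stateEmbed, him, Complex.mul_im, -Complex.ofReal_mul, -Complex.ofReal_inv]

lemma trace_ptm [∀ s, Fintype (ι s)] (m : Finset (Fin n))
    (σ : Matrix ((s : Fin n) → ι s) ((s : Fin n) → ι s) ℂ)
    (A : (s : Fin n) → Matrix (ι s) (ι s) ℂ) (h : ∀ s, (A s)ᵀ = A s) :
    Matrix.trace (ptm m σ * npTensor A) = Matrix.trace (σ * npTensor A) := by
  simp only [Matrix.trace, Matrix.diag, Matrix.mul_apply]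
  rw [← Fintype.sum_prod_type' (f := fun r c => ptm m σ r c * npTensor A c r),
    ← Fintype.sum_prod_type' (f := fun r c => σ r c * npTensor A c r)]
  let g : ((s : Fin n) → ι s) × ((s : Fin n) → ι s) → ((s : Fin n) → ι s) × ((s : Fin n) → ι s) :=
    fun x => (fun s => if s ∈ m then x.2 s else x.1 s, fun s => if s ∈ m then x.1 s else x.2 s)
  have hg : Function.Involutive g := by
    intro x
    apply Prod.ext <;> ext s <;> by_cases hs : s ∈ m <;> simp [g, hs]
  rw [← Equiv.sum_comp hg.toPerm (fun x => σ x.1 x.2 * npTensor A x.2 x.1)]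
  refine Finset.sum_congr rfl fun x _ => ?_
  simp only [ptm, Function.Involutive.coe_toPerm, g]
  congr 1
  simp only [npTensor]
  refine Finset.prod_congr rfl fun s _ => ?_
  by_cases hs : s ∈ m
  · simp only [hs, if_true]
    rw [← Matrix.transpose_apply (A s), h s]
  · simp [hs]

lemma stateEmbed_transpose (ρ : Matrix ((s : Fin n) → ι s) ((s : Fin n) → ι s) ℂ)
    (h : ρ.IsHermitian) : (stateEmbed ρ)ᵀ = stateEmbed ρ := by
  ext r c
  simp only [Matrix.transpose_apply, stateEmbed]
  congr 2
  rw [← h.apply, ← Complex.conj_re]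
  simp only [oneMinusIY_eq, map_mul, map_prod]
  simp [mul_comm]

lemma ptm_add (m : Finset (Fin n)) (σ τ : Matrix ((s : Fin n) → ι s) ((s : Fin n) → ι s) ℂ) :
    ptm m (σ + τ) = ptm m σ + ptm m τ := rfl

lemma ptm_smul (m : Finset (Fin n)) (t : ℝ)
    (σ : Matrix ((s : Fin n) → ι s) ((s : Fin n) → ι s) ℂ) :
    ptm m (t • σ) = t • ptm m σ := rfl

lemma ptm_transpose (m : Finset (Fin n))
    (σ : Matrix ((s : Fin n) → ι s) ((s : Fin n) → ι s) ℂ) :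
    (ptm m σ)ᵀ = ptm m σᵀ := rfl

lemma npTensor_one [∀ s, DecidableEq (ι s)] :
    npTensor (fun s => (1 : Matrix (ι s) (ι s) ℂ)) = 1 := by
  ext i j
  by_cases h : i = j
  · subst h; simp [npTensor]
  · obtain ⟨s, hs⟩ := Function.ne_iff.mp h
    rw [Matrix.one_apply_ne h]
    exact Finset.prod_eq_zero (Finset.mem_univ s) (Matrix.one_apply_ne hs)

end

/-- Proposition 1(a): if the given quantum representation uses a state ρ
with positive semidefinite partial transpose across a bipartition m, then the distribution
has a quantum representation on the doubled spaces by a real, PPT-invariant state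
(ρ' = ρ'ᵀ = ρ'^{T_m}) together with real symmetric projections. -/
theorem real_PPT_invariant_quantum_representation
    {n : ℕ} {ι X O : Fin n → Type*}
    [∀ s, Fintype (ι s)] [∀ s, Nonempty (ι s)] [∀ s, DecidableEq (ι s)]
    [∀ s, Fintype (O s)]
    (ρ : Matrix ((s : Fin n) → ι s) ((s : Fin n) → ι s) ℂ)
    (hρ : ρ.PosSemidef) (htr : Matrix.trace ρ = 1)
    (m : Finset (Fin n)) (hppt : (ptm m ρ).PosSemidef)
    (M : (s : Fin n) → X s → O s → Matrix (ι s) (ι s) ℂ)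
    (hMh : ∀ s x a, (M s x a).IsHermitian)
    (hMi : ∀ s x a, M s x a * M s x a = M s x a)
    (hMs : ∀ s x, ∑ a, M s x a = 1)
    (P : ((s : Fin n) → O s) → ((s : Fin n) → X s) → ℝ)
    (hP : ∀ a x, (P a x : ℂ) = Matrix.trace (ρ * npTensor (fun s => M s (x s) (a s)))) :
    ∃ (ρ' : Matrix ((s : Fin n) → Fin 2 × ι s) ((s : Fin n) → Fin 2 × ι s) ℂ)
      (M' : (s : Fin n) → X s → O s → Matrix (Fin 2 × ι s) (Fin 2 × ι s) ℂ),
      ρ'.PosSemidef ∧ Matrix.trace ρ' = 1 ∧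
      (∀ p q, (ρ' p q).im = 0) ∧ ρ'ᵀ = ρ' ∧ ptm m ρ' = ρ' ∧
      (∀ s x a, (M' s x a).IsHermitian ∧ M' s x a * M' s x a = M' s x a ∧
        (∀ p q, ((M' s x a) p q).im = 0) ∧ (M' s x a)ᵀ = M' s x a) ∧
      (∀ s x, ∑ a, M' s x a = 1) ∧
      (∀ a x, (P a x : ℂ) = Matrix.trace (ρ' * npTensor (fun s => M' s (x s) (a s)))) := by
  have hsymm : ∀ A : (s : Fin n) → Matrix (ι s) (ι s) ℂ, (∀ s, (A s).IsHermitian) →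
      Matrix.trace (((1 / 2 : ℝ) • (stateEmbed ρ + ptm m (stateEmbed ρ))) *
        npTensor (fun s => obsEmbed (A s))) =
      (((Matrix.trace (ρ * npTensor A)).re : ℝ) : ℂ) := by
    intro A hA
    rw [Matrix.smul_mul, Matrix.trace_smul, add_mul, Matrix.trace_add,
      trace_ptm m _ _ (fun s => obsEmbed_conjTranspose (hA s)), trace_stateEmbed]
    rw [Complex.real_smul]
    push_cast
    ring
  refine ⟨(1 / 2 : ℝ) • (stateEmbed ρ + ptm m (stateEmbed ρ)),
    fun s x a => obsEmbed (M s x a), ?_, ?_, ?_, ?_, ?_, ?_, ?_, ?_⟩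
  · have h0 := psd_ptm_stateEmbed ∅ ρ (by rwa [ptm_empty])
    rw [ptm_empty] at h0
    exact (h0.add (psd_ptm_stateEmbed m ρ hppt)).smul (by norm_num)
  · have := hsymm (fun s => 1) (fun s => Matrix.isHermitian_one)
    simp only [obsEmbed_one, npTensor_one, mul_one, htr] at this
    simpa using this
  · intro p q
    simp [stateEmbed, ptm, -Complex.ofReal_mul, -Complex.ofReal_inv]
  · rw [Matrix.transpose_smul, Matrix.transpose_add, ptm_transpose,
      stateEmbed_transpose ρ hρ.1]
  · rw [ptm_smul, ptm_add, ptm_ptm, add_comm]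
  · intro s x a
    have ht := obsEmbed_conjTranspose (hMh s x a)
    refine ⟨?_, by rw [obsEmbed_mul, hMi], obsEmbed_im _, ht⟩
    ext p q
    have h1 : obsEmbed (M s x a) q p = obsEmbed (M s x a) p q := congrFun (congrFun ht p) q
    rw [Matrix.conjTranspose_apply]
    refine (congrArg star h1).trans ?_
    exact Complex.conj_eq_iff_im.mpr (obsEmbed_im _ _ _)
  · intro s x
    rw [obsEmbed_sum, hMs, obsEmbed_one]
  · intro a x
    rw [hsymm _ (fun s => hMh s (x s) (a s)), ← hP]
    simp
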